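/- The cycle graph C_10 on 10 vertices satisfies rvcl(C_10) = 5. -/

import Mathlib

namespace LocatingRainbow

open SimpleGraph

variable {V : Type*}

/-- The internal vertices of a walk: its support without the endpoints. -/
def internalVertices {G : SimpleGraph V} {u v : V} (p : G.Walk u v) : List V :=
  p.support.tail.dropLast

/-- `c` is a rainbow vertex coloring of `G` (with colors in `Fin k`) if any two distinct
vertices are joined by a path whose internal vertices have pairwise distinct colors. -/
def IsRainbowVertexColoring (G : SimpleGraph V) {k : ℕ} (c : V → Fin k) : Prop :=
  ∀ u v : V, u ≠ v → ∃ p : G.Walk u v, p.IsPath ∧ ((internalVertices p).map c).Nodup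

/-- The distance from a vertex `v` to the color class of the color `i`. -/
noncomputable def distToColor (G : SimpleGraph V) {k : ℕ} (c : V → Fin k) (v : V) (i : Fin k) :
    ℕ :=
  sInf {m | ∃ y, c y = i ∧ G.dist v y = m}

/-- The rainbow code of a vertex `v`: the vector of distances to all color classes. -/
noncomputable def rainbowCode (G : SimpleGraph V) {k : ℕ} (c : V → Fin k) (v : V) :
    Fin k → ℕ :=
  fun i => distToColor G c v i

/-- `c` is a locating rainbow coloring if it is a rainbow vertex coloring and distinct
vertices have distinct rainbow codes. -/
def IsLocatingRainbowColoring (G : SimpleGraph V) {k : ℕ} (c : V → Fin k) : Prop :=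
  IsRainbowVertexColoring G c ∧ Function.Injective (rainbowCode G c)

/-- The rainbow vertex connection number of `G`. -/
noncomputable def rvc (G : SimpleGraph V) : ℕ :=
  sInf {k | ∃ c : V → Fin k, IsRainbowVertexColoring G c}

/-- The locating rainbow connection number of `G`. -/
noncomputable def rvcl (G : SimpleGraph V) : ℕ :=
  sInf {k | ∃ c : V → Fin k, IsLocatingRainbowColoring G c}

end LocatingRainbow

namespace LocatingRainbow

open SimpleGraph

/-- Explicit distance on the ten-cycle. -/
def cd (u v : Fin 10) : ℕ := min (v - u).val (u - v).val

lemma adj_iff (u v : Fin 10) : (cycleGraph 10).Adj u v ↔ v = u + 1 ∨ u = v + 1 := by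
  rw [cycleGraph_adj]
  constructor
  · rintro (h | h)
    · right; rw [← h]; abel
    · left; rw [← h]; abel
  · rintro (h | h)
    · right; rw [h]; abel
    · left; rw [h]; abel

lemma cd_lip : ∀ u w : Fin 10, cd u (w + 1) ≤ cd u w + 1 ∧ cd u w ≤ cd u (w + 1) + 1 := by
  decide +kernel

lemma cd_le_length {w v : Fin 10} (p : (cycleGraph 10).Walk w v) :
    ∀ u : Fin 10, cd u v ≤ cd u w + p.length := by
  induction p with
  | nil => intro u; simp
  | @cons x y z h p ih =>
    intro u
    have h1 := ih u
    rw [Walk.length_cons]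
    rcases (adj_iff _ _).1 h with h | h
    · subst h
      have := (cd_lip u x).1
      omega
    · subst h
      have := (cd_lip u y).2
      omega

lemma fwd (u : Fin 10) (n : ℕ) : ∃ v : Fin 10, ∃ p : (cycleGraph 10).Walk u v,
    v = u + Fin.ofNat 10 n ∧ p.length = n ∧
    p.support = (List.range (n + 1)).map (fun j => u + Fin.ofNat 10 j) := by
  induction n with
  | zero => exact ⟨u, Walk.nil, by simp, by simp, by simp⟩
  | succ n ih =>
    obtain ⟨v, p, hv, hl, hs⟩ := ih
    have e : u + Fin.ofNat 10 (n + 1) = v + 1 := by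
      rw [hv]; ext; simp [Fin.val_add]; omega
    refine ⟨v + 1, p.concat ((adj_iff _ _).2 (Or.inl rfl)), e.symm, by simp [hl], ?_⟩
    rw [Walk.support_concat, hs, List.range_succ (n := n + 1), List.map_append]
    simp only [List.map_cons, List.map_nil, e]

lemma fwd_to (u v : Fin 10) : ∃ p : (cycleGraph 10).Walk u v,
    p.length = (v - u).val ∧
    p.support = (List.range ((v - u).val + 1)).map (fun j => u + Fin.ofNat 10 j) := by
  obtain ⟨w, p, hv, hl, hs⟩ := fwd u (v - u).val
  have : w = v := by rw [hv]; simp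
  subst this
  exact ⟨p, hl, hs⟩

lemma dist_eq (u v : Fin 10) : (cycleGraph 10).dist u v = cd u v := by
  apply le_antisymm
  · obtain ⟨p, hp, -⟩ := fwd_to u v
    obtain ⟨q, hq, -⟩ := fwd_to v u
    apply le_min
    · rw [← hp]; exact dist_le p
    · rw [← hq, dist_comm]; exact dist_le q
  · obtain ⟨p, -, -⟩ := fwd_to u v
    obtain ⟨q, hq⟩ := p.reachable.exists_walk_length_eq_dist
    have := cd_le_length q u
    rw [hq] at this
    simpa [cd] using this

lemma distToColor_le {k : ℕ} (c : Fin 10 → Fin k) (v : Fin 10) (i : Fin k) (hi : ∃ y, c y = i)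
    (d : ℕ) : distToColor (cycleGraph 10) c v i ≤ d ↔ ∃ y, c y = i ∧ cd v y ≤ d := by
  unfold distToColor
  simp only [dist_eq]
  constructor
  · intro h
    have hne : {m | ∃ y, c y = i ∧ cd v y = m}.Nonempty := by
      obtain ⟨y, hy⟩ := hi
      exact ⟨_, y, hy, rfl⟩
    obtain ⟨y, hy, hy2⟩ := Nat.sInf_mem hne
    exact ⟨y, hy, hy2.trans_le h⟩
  · rintro ⟨y, hy, h⟩
    refine le_trans (Nat.sInf_le ?_) h
    exact ⟨y, hy, rfl⟩

lemma cd_le_five : ∀ u v : Fin 10, cd u v ≤ 5 := by decide +kernel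

/-- Decidable form of equality of codes. -/
def Same {k : ℕ} (c : Fin 10 → Fin k) (u v : Fin 10) : Prop :=
  ∀ i : Fin k, ∀ d : Fin 5, (∃ y, c y = i ∧ cd u y ≤ d.val) ↔ (∃ y, c y = i ∧ cd v y ≤ d.val)

instance {k : ℕ} (c : Fin 10 → Fin k) (u v : Fin 10) : Decidable (Same c u v) := by
  unfold Same; infer_instance

lemma code_eq_iff {k : ℕ} (c : Fin 10 → Fin k) (u v : Fin 10) :
    rainbowCode (cycleGraph 10) c u = rainbowCode (cycleGraph 10) c v ↔ Same c u v := by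
  constructor
  · intro h i d
    by_cases hi : ∃ y, c y = i
    · rw [← distToColor_le c u i hi, ← distToColor_le c v i hi]
      have := congrFun h i
      unfold rainbowCode at this
      rw [this]
    · push Not at hi
      simp [hi]
  · intro h
    funext i
    unfold rainbowCode
    by_cases hi : ∃ y, c y = i
    · have key : ∀ d : ℕ, distToColor (cycleGraph 10) c u i ≤ d ↔
          distToColor (cycleGraph 10) c v i ≤ d := by
        intro d
        rw [distToColor_le c u i hi, distToColor_le c v i hi]
        by_cases hd : d < 5
        · exact h i ⟨d, hd⟩
        · obtain ⟨y, hy⟩ := hi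
          have h5 := cd_le_five u y
          have h6 := cd_le_five v y
          exact ⟨fun _ => ⟨y, hy, by omega⟩, fun _ => ⟨y, hy, by omega⟩⟩
      exact le_antisymm ((key _).2 le_rfl) ((key _).1 le_rfl)
    · push Not at hi
      simp [distToColor, hi]

/-- `x` lies strictly between `a` and `b` going forward. -/
def Btw (a b x : Fin 10) : Prop := x ≠ a ∧ (x - a).val < (b - a).val

instance (a b x : Fin 10) : Decidable (Btw a b x) := by unfold Btw; infer_instance

lemma btw_step : ∀ a b x : Fin 10,
    (Btw a b x → x + 1 ≠ b → Btw a b (x + 1)) ∧ (Btw a b (x + 1) → x ≠ a → Btw a b x) := by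
  decide +kernel

lemma btw_walk {u v : Fin 10} (p : (cycleGraph 10).Walk u v) (a b : Fin 10)
    (ha : a ∉ p.support) (hb : b ∉ p.support) (hu : Btw a b u) : Btw a b v := by
  induction p with
  | nil => exact hu
  | @cons x y z h p ih =>
    rw [Walk.support_cons, List.mem_cons, not_or] at ha hb
    refine ih ha.2 hb.2 ?_
    have ha' : a ≠ y := fun e => ha.2 (e ▸ p.start_mem_support)
    have hb' : b ≠ y := fun e => hb.2 (e ▸ p.start_mem_support)
    rcases (adj_iff _ _).1 h with h | h
    · subst h
      exact (btw_step a b _).1 hu (fun e => hb' e.symm)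
    · subst h
      exact (btw_step a b _).2 hu (fun e => ha' e.symm)

lemma mem_internal {u v x : Fin 10} (p : (cycleGraph 10).Walk u v) (hx : x ∈ p.support)
    (hxu : x ≠ u) (hxv : x ≠ v) : x ∈ internalVertices p := by
  unfold internalVertices
  rw [← p.cons_tail_support] at hx
  have h1 : x ∈ p.support.tail := by
    rcases List.mem_cons.1 hx with h | h
    · exact absurd h hxu
    · exact h
  have hne : p.support.tail ≠ [] := List.ne_nil_of_mem h1
  rw [← List.dropLast_append_getLast hne, List.mem_append] at h1
  rcases h1 with h | h
  · exact h
  · rw [List.mem_singleton, List.getLast_tail, Walk.getLast_support] at h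
    exact absurd h hxv

lemma btw_facts : ∀ u v a b : Fin 10, Btw u v a → Btw v u b → Btw b a u ∧ ¬ Btw b a v := by
  decide +kernel

lemma btw_ne : ∀ u v x : Fin 10, Btw u v x → x ≠ u ∧ x ≠ v := by
  decide +kernel

lemma arcs {k : ℕ} {c : Fin 10 → Fin k} (h : IsRainbowVertexColoring (cycleGraph 10) c)
    (u v : Fin 10) (huv : u ≠ v) :
    (∀ x y, Btw u v x → Btw u v y → c x = c y → x = y) ∨
    (∀ x y, Btw v u x → Btw v u y → c x = c y → x = y) := by
  obtain ⟨p, -, hp⟩ := h u v huv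
  have inj := List.inj_on_of_nodup_map hp
  by_cases hA : ∀ x, Btw u v x → x ∈ p.support
  · left
    intro x y hx hy e
    have h1 := btw_ne _ _ _ hx
    have h2 := btw_ne _ _ _ hy
    exact inj (mem_internal p (hA x hx) h1.1 h1.2) (mem_internal p (hA y hy) h2.1 h2.2) e
  · right
    push Not at hA
    obtain ⟨a, ha, ha'⟩ := hA
    have hB : ∀ x, Btw v u x → x ∈ p.support := by
      intro b hb
      by_contra hb'
      have := btw_facts u v a b ha hb
      exact this.2 (btw_walk p b a hb' ha' this.1)
    intro x y hx hy e
    have h1 := btw_ne _ _ _ hx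
    have h2 := btw_ne _ _ _ hy
    exact inj (mem_internal p (hB x hx) h1.2 h1.1) (mem_internal p (hB y hy) h2.2 h2.1) e

lemma five_btw : ∀ u : Fin 10, Btw (u + 4) u (u + 5) ∧ Btw (u + 4) u (u + 6) ∧
    Btw (u + 4) u (u + 7) ∧ Btw (u + 4) u (u + 8) ∧ Btw (u + 4) u (u + 9) ∧
    Btw u (u + 4) (u + 1) ∧ Btw u (u + 4) (u + 2) ∧ Btw u (u + 4) (u + 3) ∧ u ≠ u + 4 := by
  decide +kernel

lemma window {c : Fin 10 → Fin 4} (h : IsRainbowVertexColoring (cycleGraph 10) c) (u : Fin 10) :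
    c (u + 1) ≠ c (u + 2) ∧ c (u + 1) ≠ c (u + 3) ∧ c (u + 2) ≠ c (u + 3) := by
  obtain ⟨b5, b6, b7, b8, b9, b1, b2, b3, hne⟩ := five_btw u
  rcases arcs h u (u + 4) hne with h | h
  · refine ⟨fun e => ?_, fun e => ?_, fun e => ?_⟩
    · exact absurd (add_left_cancel (h _ _ b1 b2 e)) (by decide)
    · exact absurd (add_left_cancel (h _ _ b1 b3 e)) (by decide)
    · exact absurd (add_left_cancel (h _ _ b2 b3 e)) (by decide)
  · exfalso
    have hb : ∀ i : Fin 5, Btw (u + 4) u (u + (![5, 6, 7, 8, 9] : Fin 5 → Fin 10) i) := by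
      intro i
      fin_cases i <;> assumption
    have : Function.Injective (fun i : Fin 5 => c (u + (![5, 6, 7, 8, 9] : Fin 5 → Fin 10) i)) := by
      intro i j e
      have h2 := add_left_cancel (h _ _ (hb i) (hb j) e)
      clear e
      revert i j
      decide
    have := Fintype.card_le_of_injective _ this
    simp at this

lemma anti_btw : ∀ u : Fin 10, Btw u (u + 5) (u + 1) ∧ Btw u (u + 5) (u + 4) ∧
    Btw (u + 5) u (u + 6) ∧ Btw (u + 5) u (u + 9) ∧ u ≠ u + 5 := by
  decide +kernel

lemma anti {c : Fin 10 → Fin 4} (h : IsRainbowVertexColoring (cycleGraph 10) c) (u : Fin 10) :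
    c (u + 1) ≠ c (u + 4) ∨ c (u + 6) ≠ c (u + 9) := by
  obtain ⟨b1, b4, b6, b9, hne⟩ := anti_btw u
  rcases arcs h u (u + 5) hne with h | h
  · left
    exact fun e => absurd (add_left_cancel (h _ _ b1 b4 e)) (by decide)
  · right
    exact fun e => absurd (add_left_cancel (h _ _ b6 b9 e)) (by decide)

set_option synthInstance.maxSize 10000 in
set_option synthInstance.maxHeartbeats 1000000 in
set_option maxRecDepth 10000 in
lemma search : ∀ a3 : Fin 4, 1 ≠ a3 → 2 ≠ a3 → ∀ a4, 2 ≠ a4 → a3 ≠ a4 → ∀ a5, a3 ≠ a5 → a4 ≠ a5 →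
    ∀ a6, a4 ≠ a6 → a5 ≠ a6 → ∀ a7, a5 ≠ a7 → a6 ≠ a7 → ∀ a8, a6 ≠ a8 → a7 ≠ a8 →
    (0 ≠ a3 ∨ a5 ≠ a8) → a8 ≠ 0 →
    ∀ a9, a7 ≠ a9 → a8 ≠ a9 → a9 ≠ 0 → a9 ≠ 1 →
    (1 ≠ a4 ∨ a6 ≠ a9) → (2 ≠ a5 ∨ a7 ≠ 0) → (a3 ≠ a6 ∨ a8 ≠ 1) → (a4 ≠ a7 ∨ a9 ≠ 2) →
    ∃ u v : Fin 10, u ≠ v ∧ Same ![0, 1, 2, a3, a4, a5, a6, a7, a8, a9] u v := by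
  decide +kernel

lemma not_four_normal (c : Fin 10 → Fin 4) (h0 : c 0 = 0) (h1 : c 1 = 1) (h2 : c 2 = 2) :
    ¬ IsLocatingRainbowColoring (cycleGraph 10) c := by
  rintro ⟨h, hinj⟩
  have w := window h
  have a := anti h
  obtain ⟨u, v, huv, hs⟩ := search
    (c 3) (h1 ▸ (w 0).2.1) (h2 ▸ (w 0).2.2) (c 4) (h2 ▸ (w 1).2.1) (w 1).2.2
    (c 5) (w 2).2.1 (w 2).2.2
    (c 6) (w 3).2.1 (w 3).2.2 (c 7) (w 4).2.1 (w 4).2.2 (c 8) (w 5).2.1 (w 5).2.2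
    (h0 ▸ a 9) (h0 ▸ (w 7).2.1) (c 9) (w 6).2.1 (w 6).2.2 (h0 ▸ (w 8).1) (h1 ▸ (w 8).2.1)
    (h1 ▸ a 0) (h2 ▸ h0 ▸ a 1) (h1 ▸ a 2) (h2 ▸ a 3)
  have hc : ![0, 1, 2, c 3, c 4, c 5, c 6, c 7, c 8, c 9] = c := by
    funext i
    fin_cases i
    · exact h0.symm
    · exact h1.symm
    · exact h2.symm
    all_goals rfl
  rw [hc] at hs
  exact huv (hinj ((code_eq_iff c u v).2 hs))

lemma locating_comp {k l : ℕ} (f : Fin k → Fin l) (hf : Function.Injective f)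
    {c : Fin 10 → Fin k} (hc : IsLocatingRainbowColoring (cycleGraph 10) c) :
    IsLocatingRainbowColoring (cycleGraph 10) (f ∘ c) := by
  obtain ⟨h, hinj⟩ := hc
  refine ⟨?_, ?_⟩
  · intro u v huv
    obtain ⟨p, hp, hn⟩ := h u v huv
    refine ⟨p, hp, ?_⟩
    rw [← List.map_map]
    exact hn.map hf
  · intro u v e
    apply hinj
    funext i
    have := congrFun e (f i)
    simpa [rainbowCode, distToColor, hf.eq_iff] using this

lemma normalize : ∀ a b c : Fin 4, a ≠ b → a ≠ c → b ≠ c →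
    ∃ x y z t : Fin 4, [x, y, z, t].Nodup ∧
      (![x, y, z, t] : Fin 4 → Fin 4) a = 0 ∧ (![x, y, z, t] : Fin 4 → Fin 4) b = 1 ∧
      (![x, y, z, t] : Fin 4 → Fin 4) c = 2 := by
  decide +kernel

lemma not_four (c : Fin 10 → Fin 4) : ¬ IsLocatingRainbowColoring (cycleGraph 10) c := by
  intro h
  have w := window h.1 9
  obtain ⟨x, y, z, t, hn, h0, h1, h2⟩ := normalize (c 0) (c 1) (c 2) w.1 w.2.1 w.2.2
  have hinj : Function.Injective (![x, y, z, t] : Fin 4 → Fin 4) := by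
    rw [← List.nodup_ofFn]
    simpa using hn
  exact not_four_normal _ h0 h1 h2 (locating_comp _ hinj h)

lemma not_le_four {k : ℕ} (hk : k ≤ 4) (c : Fin 10 → Fin k) :
    ¬ IsLocatingRainbowColoring (cycleGraph 10) c :=
  fun h => not_four _ (locating_comp _ (Fin.castLE_injective hk) h)

/-- The optimal coloring. -/
def col : Fin 10 → Fin 5 := ![0, 1, 2, 4, 3, 4, 3, 2, 4, 3]

/-- Forward arc as a list. -/
def arc (u v : Fin 10) : List (Fin 10) :=
  (List.range ((v - u).val + 1)).map (fun j => u + Fin.ofNat 10 j)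

lemma arc_nodup : ∀ u v : Fin 10, (arc u v).Nodup := by decide +kernel

lemma col_arc : ∀ u v : Fin 10, ((arc u v).tail.dropLast.map col).Nodup ∨
    ((arc v u).tail.dropLast.map col).Nodup := by decide +kernel

lemma col_inj : ∀ u v : Fin 10, Same col u v → u = v := by decide +kernel

lemma internal_reverse {u v : Fin 10} (p : (cycleGraph 10).Walk u v) :
    internalVertices p.reverse = (internalVertices p).reverse := by
  unfold internalVertices
  rw [Walk.support_reverse, List.tail_reverse, List.dropLast_reverse, List.tail_dropLast]

lemma col_locating : IsLocatingRainbowColoring (cycleGraph 10) col := by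
  refine ⟨?_, fun u v h => col_inj u v ((code_eq_iff col u v).1 h)⟩
  intro u v _
  rcases col_arc u v with h | h
  · obtain ⟨p, -, hs⟩ := fwd_to u v
    change p.support = arc u v at hs
    refine ⟨p, (Walk.isPath_def p).2 (hs ▸ arc_nodup u v), ?_⟩
    unfold internalVertices
    rw [hs]
    exact h
  · obtain ⟨p, -, hs⟩ := fwd_to v u
    change p.support = arc v u at hs
    refine ⟨p.reverse, ((Walk.isPath_def p).2 (hs ▸ arc_nodup v u)).reverse, ?_⟩
    rw [internal_reverse, List.map_reverse, List.nodup_reverse]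
    unfold internalVertices
    rw [hs]
    exact h

end LocatingRainbow

open LocatingRainbow SimpleGraph in
/-- The cycle graph `C_10` satisfies `rvcl(C_10) = 5`. -/
theorem rvcl_cycleGraph_ten : rvcl (cycleGraph 10) = 5 := by
  unfold rvcl
  apply le_antisymm
  · apply Nat.sInf_le
    exact ⟨col, col_locating⟩
  · refine le_csInf ?_ ?_
    · exact ⟨5, col, col_locating⟩
    rintro k ⟨c, hc⟩
    by_contra hk
    exact not_le_four (by omega) c hc
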